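/- arXiv:1312.3889 — 2 statements merged into one kernel-verified Lean document; each statement's English description precedes it below -/
import Mathlib

section
/- Let K be a finite field and let d be an integer with gcd(d, |K| − 1) = 1. Let R be the set of roots of the polynomial (x+1)^d − x^d − 1 in K. Then ∑_{a ∈ K^×} W_{K,d}(a)^3 = |K|^2 · |R|. -/
open scoped BigOperators Classical

/-- The canonical additive character of a finite field `K` of characteristic `p`:
`ψ_K(x) = exp(2πi · Tr_{K/F_p}(x) / p)`, where `Tr_{K/F_p}` is the absolute trace. -/
noncomputable def canonicalAddChar (p : ℕ) [Fact p.Prime] (K : Type) [Field K] [Fintype K]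
    [Algebra (ZMod p) K] (x : K) : ℂ :=
  Complex.exp (2 * Real.pi * Complex.I * ((Algebra.trace (ZMod p) K x).val : ℂ) / (p : ℂ))

/-- The Weil sum `W_{K,d}(a) = ∑_{x ∈ K} ψ_K(x^d + a·x)`. -/
noncomputable def weilSum (p : ℕ) [Fact p.Prime] (K : Type) [Field K] [Fintype K]
    [Algebra (ZMod p) K] (d : ℤ) (a : K) : ℂ :=
  ∑ x : K, canonicalAddChar p K (x ^ d + a * x)

/-- The value set `{W_{K,d}(a) : a ∈ K^×}` of the Weil sum. -/
noncomputable def weilValues (p : ℕ) [Fact p.Prime] (K : Type) [Field K] [Fintype K]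
    [Algebra (ZMod p) K] (d : ℤ) : Set ℂ :=
  {w : ℂ | ∃ a : K, a ≠ 0 ∧ weilSum p K d a = w}

/-- `d` is degenerate over a finite field of order `q` and characteristic `p` if
`d ≡ p^j (mod q − 1)` for some nonnegative integer `j`. -/
def IsDegenerate (p : ℕ) (q : ℕ) (d : ℤ) : Prop :=
  ∃ j : ℕ, d ≡ (p : ℤ) ^ j [ZMOD (q : ℤ) - 1]

/-!
Expanding the cube and summing over all `a ∈ K` forces `z = -(x + y)`, which leaves `q = |K|` times
the sum of `ψ (x ^ d + y ^ d - (x + y) ^ d)` over `x` and `y`. For `y ≠ 0`, the substitution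
`x = y t` turns the argument into `y ^ d (t ^ d + 1 - (t + 1) ^ d)`. Since `y ↦ y ^ d` permutes
`K`, summing over `y` gives `q` for each root `t` of `(t + 1) ^ d - t ^ d - 1` and `0` for every
other `t`. The term `a = 0` of the cubic moment vanishes, again because `y ↦ y ^ d` is a
permutation.
-/

section WalshTransform

variable {A R : Type*} [CommRing A] [Fintype A] [CommRing R]

/-- The Walsh transform of `f : A → A` with respect to an additive character `ψ` of the finite
ring `A`. The Weil sum `W_{K,d}` is the case where `f` is the power map `x ↦ x ^ d` and `ψ` the
canonical additive character. -/
def walshTransform (ψ : AddChar A R) (f : A → A) (a : A) : R :=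
  ∑ x, ψ (f x + a * x)

theorem walshTransform_pow_three (ψ : AddChar A R) (f : A → A) (a : A) :
    walshTransform ψ f a ^ 3 =
      ∑ x, ∑ y, ∑ z, ψ (f x + f y + f z) * ψ (a * (x + y + z)) := by
  rw [walshTransform, pow_three, Finset.sum_mul_sum, Finset.sum_mul_sum]
  simp only [Finset.mul_sum]
  refine Finset.sum_congr rfl fun x _ ↦ Finset.sum_congr rfl fun y _ ↦
    Finset.sum_congr rfl fun z _ ↦ ?_
  simp only [mul_add, AddChar.map_add_eq_mul]
  ring

variable [IsDomain R] {ψ : AddChar A R}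

theorem walshTransform_const (hψ : ψ.IsPrimitive) (c : A) {a : A} (ha : a ≠ 0) :
    walshTransform ψ (fun _ ↦ c) a = 0 := by
  simp only [walshTransform, AddChar.map_add_eq_mul, ← Finset.mul_sum, mul_comm a,
    AddChar.sum_mulShift a hψ, if_neg ha, Nat.cast_zero, mul_zero]

theorem sum_addChar_comp_mul (hψ : ψ.IsPrimitive) {f : A → A} (hf : f.Bijective) (c : A) :
    ∑ y, ψ (f y * c) = if c = 0 then (Fintype.card A : R) else 0 := by
  rw [hf.sum_comp fun u ↦ ψ (u * c), AddChar.sum_mulShift c hψ, Nat.cast_ite, Nat.cast_zero]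

theorem walshTransform_zero [Nontrivial A] (hψ : ψ.IsPrimitive) {f : A → A}
    (hf : f.Bijective) : walshTransform ψ f 0 = 0 := by
  simpa [walshTransform] using sum_addChar_comp_mul hψ hf 1

theorem sum_walshTransform_pow_three (hψ : ψ.IsPrimitive) (f : A → A) :
    ∑ a, walshTransform ψ f a ^ 3 =
      Fintype.card A * ∑ y, ∑ x, ψ (f x + f y + f (-(x + y))) := by
  have sum_over_z (x y : A) :
      ∑ z, ψ (f x + f y + f z) * ∑ a, ψ (a * (x + y + z)) =
        Fintype.card A * ψ (f x + f y + f (-(x + y))) := by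
    simp [AddChar.sum_mulShift _ hψ, add_eq_zero_iff_neg_eq, mul_comm]
  calc ∑ a, walshTransform ψ f a ^ 3
      = ∑ x, ∑ y, ∑ z, ψ (f x + f y + f z) * ∑ a, ψ (a * (x + y + z)) := by
        simp only [walshTransform_pow_three, Finset.mul_sum]
        rw [Finset.sum_comm]
        refine Finset.sum_congr rfl fun x _ ↦ ?_
        rw [Finset.sum_comm]
        exact Finset.sum_congr rfl fun y _ ↦ Finset.sum_comm
    _ = Fintype.card A * ∑ y, ∑ x, ψ (f x + f y + f (-(x + y))) := by
        simp only [sum_over_z]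
        rw [Finset.sum_comm]
        simp only [Finset.mul_sum]

end WalshTransform

-- `f (-1)` squares to `1`, and it differs from `1 = f 1` unless `-1 = 1`.
theorem map_neg_of_injective {A F : Type*} [Ring A] [NoZeroDivisors A] [FunLike F A A]
    [MonoidHomClass F A A] {f : F} (hf : Function.Injective f) (x : A) : f (-x) = -f x := by
  have map_neg_one_eq : f (-1) = -1 := by
    have hsq : f (-1) * f (-1) = 1 := by rw [← map_mul, neg_mul_neg, one_mul, map_one]
    rcases mul_self_eq_one_iff.mp hsq with h | h
    · have neg_one : (-1 : A) = 1 := hf (h.trans (map_one f).symm)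
      rw [h, neg_one]
    · exact h
  rw [← neg_one_mul, map_mul, map_neg_one_eq, neg_one_mul]

section CubicMoment

variable {K R : Type*} [Field K] [Fintype K] [CommRing R]

theorem sum_addChar_map_add_sub_map_add (ψ : AddChar K R) (f : K →*₀ K) (y : K) :
    ∑ x, ψ (f x + f y - f (x + y)) = ∑ t, ψ (f y * (f t + 1 - f (t + 1))) := by
  rcases eq_or_ne y 0 with rfl | hy
  · simp
  · rw [← (mulLeft_bijective₀ y hy).sum_comp]
    refine Finset.sum_congr rfl fun t _ ↦ congrArg ψ ?_
    rw [← mul_add_one, map_mul, map_mul]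
    ring

theorem sum_units_walshTransform_pow_three [DecidableEq K] [IsDomain R] {ψ : AddChar K R}
    (hψ : ψ.IsPrimitive) {f : K →*₀ K} (hf : Function.Injective f) :
    ∑ a : Kˣ, walshTransform ψ f a ^ 3 =
      (Fintype.card K : R) ^ 2 * ({x : K | f (x + 1) - f x - 1 = 0} : Set K).ncard := by
  have hbij : Function.Bijective f := hf.bijective_of_finite
  have root_iff (t : K) : f t + 1 - f (t + 1) = 0 ↔ f (t + 1) - f t - 1 = 0 := by
    rw [← neg_eq_zero, neg_sub, sub_sub]
  calc ∑ a : Kˣ, walshTransform ψ f a ^ 3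
      = ∑ a, walshTransform ψ f a ^ 3 := by
        refine Fintype.sum_of_injective _ Units.val_injective _ _ (fun a ha ↦ ?_) fun _ ↦ rfl
        obtain rfl : a = 0 := by_contra fun h ↦ ha ⟨Units.mk0 a h, rfl⟩
        rw [walshTransform_zero hψ hbij, zero_pow three_ne_zero]
    _ = Fintype.card K * ∑ y, ∑ x, ψ (f x + f y - f (x + y)) := by
        simp only [sum_walshTransform_pow_three hψ, map_neg_of_injective hf, ← sub_eq_add_neg]
    _ = Fintype.card K * ∑ t, ∑ y, ψ (f y * (f t + 1 - f (t + 1))) := by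
        simp only [sum_addChar_map_add_sub_map_add]
        rw [Finset.sum_comm]
    _ = Fintype.card K * ∑ t, if f (t + 1) - f t - 1 = 0 then (Fintype.card K : R) else 0 := by
        simp only [sum_addChar_comp_mul hψ hbij, root_iff]
    _ = (Fintype.card K : R) ^ 2 * ({x : K | f (x + 1) - f x - 1 = 0} : Set K).ncard := by
        rw [← Finset.sum_filter, Finset.sum_const, nsmul_eq_mul, Set.ncard_eq_toFinset_card',
          Set.toFinset_ofPred]
        ring

end CubicMoment

section ZPow

/-- The map `x ↦ x ^ d` for a nonzero integer `d`, as a homomorphism of groups with zero; it is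
the integer counterpart of `powMonoidWithZeroHom`. -/
def zpowMonoidWithZeroHom {G₀ : Type*} [CommGroupWithZero G₀] {d : ℤ} (hd : d ≠ 0) :
    G₀ →*₀ G₀ where
  toFun x := x ^ d
  map_zero' := zero_zpow d hd
  map_one' := one_zpow d
  map_mul' x y := mul_zpow x y d

theorem coe_zpowMonoidWithZeroHom {G₀ : Type*} [CommGroupWithZero G₀] {d : ℤ} (hd : d ≠ 0) :
    (zpowMonoidWithZeroHom hd : G₀ → G₀) = fun x ↦ x ^ d :=
  rfl

theorem zpow_gcd_eq_one₀ {G₀ : Type*} [GroupWithZero G₀] {x : G₀} (hx : x ≠ 0) {m n : ℤ}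
    (hm : x ^ m = 1) (hn : x ^ n = 1) : x ^ (Int.gcd m n : ℤ) = 1 := by
  rw [Int.gcd_eq_gcd_ab, zpow_add₀ hx, zpow_mul, zpow_mul, hm, hn, one_zpow, one_zpow, one_mul]

theorem zpowMonoidWithZeroHom_injective {K : Type*} [Field K] [Fintype K] {d : ℤ} (hd₀ : d ≠ 0)
    (hd : Int.gcd d ((Fintype.card K : ℤ) - 1) = 1) :
    Function.Injective (zpowMonoidWithZeroHom hd₀ : K →*₀ K) := by
  intro x y (hxy : x ^ d = y ^ d)
  rcases eq_or_ne y 0 with rfl | hy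
  · rwa [zero_zpow d hd₀, zpow_eq_zero_iff hd₀] at hxy
  have hx : x ≠ 0 := by
    rintro rfl
    exact zpow_ne_zero d hy (hxy.symm.trans (zero_zpow d hd₀))
  have hdiv : x / y ≠ 0 := div_ne_zero hx hy
  have div_zpow_eq_one : (x / y) ^ d = 1 := by
    rw [div_zpow, hxy, div_self (zpow_ne_zero d hy)]
  have div_zpow_card_sub_one : (x / y) ^ ((Fintype.card K : ℤ) - 1) = 1 := by
    rw [zpow_sub_one₀ hdiv, zpow_natCast, FiniteField.pow_card,
      mul_inv_cancel₀ hdiv]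
  have div_eq_one : x / y = 1 := by
    simpa [hd] using zpow_gcd_eq_one₀ hdiv div_zpow_eq_one div_zpow_card_sub_one
  exact eq_of_div_eq_one div_eq_one

end ZPow

section CanonicalCharacter

variable (p : ℕ) [Fact p.Prime]

/-- The canonical additive character of `K` as a bundled `AddChar`: the standard character of
`ZMod p` composed with the absolute trace. -/
noncomputable def traceAddChar (K : Type*) [Field K] [Algebra (ZMod p) K] : AddChar K ℂ :=
  ZMod.stdAddChar.compAddMonoidHom (Algebra.trace (ZMod p) K).toAddMonoidHom

theorem traceAddChar_isPrimitive (K : Type*) [Field K] [Finite K] [Algebra (ZMod p) K] :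
    (traceAddChar p K).IsPrimitive := by
  refine AddChar.IsPrimitive.of_ne_one (AddChar.ne_one_iff.mpr ?_)
  obtain ⟨x, hx⟩ := Algebra.trace_surjective (ZMod p) K 1
  have apply_x : traceAddChar p K x = ZMod.stdAddChar (N := p) 1 :=
    congrArg ZMod.stdAddChar hx
  refine ⟨x, fun h ↦ one_ne_zero (α := ZMod p) (ZMod.injective_stdAddChar ?_)⟩
  rw [← apply_x, h, AddChar.map_zero_eq_one]

variable {K : Type} [Field K] [Fintype K] [Algebra (ZMod p) K]

theorem traceAddChar_eq_canonicalAddChar (x : K) : traceAddChar p K x = canonicalAddChar p K x :=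
  ZMod.toCircle_apply _

theorem weilSum_eq_walshTransform (d : ℤ) (a : K) :
    weilSum p K d a = walshTransform (traceAddChar p K) (· ^ d) a := by
  simp only [weilSum, walshTransform, traceAddChar_eq_canonicalAddChar]

end CanonicalCharacter

theorem stmt10_general {K R : Type*} [Field K] [Fintype K] [DecidableEq K] [CommRing R]
    [IsDomain R] {ψ : AddChar K R} (hψ : ψ.IsPrimitive) {d : ℤ}
    (hd : Int.gcd d ((Fintype.card K : ℤ) - 1) = 1) :
    ∑ a : Kˣ, walshTransform ψ (· ^ d) (a : K) ^ 3 =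
      (Fintype.card K : R) ^ 2 * ({x : K | (x + 1) ^ d - x ^ d - 1 = 0} : Set K).ncard := by
  rcases eq_or_ne d 0 with rfl | hd₀
  -- The constant map `x ↦ x ^ 0 = 1` is no permutation, but here both sides vanish.
  · simp [walshTransform_const hψ]
  · simpa only [coe_zpowMonoidWithZeroHom] using
      sum_units_walshTransform_pow_three hψ (zpowMonoidWithZeroHom_injective hd₀ hd)

theorem stmt10 (p : ℕ) [Fact p.Prime] (K : Type) [Field K] [Fintype K] [DecidableEq K]
    [CharP K p] [Algebra (ZMod p) K]
    (d : ℤ) (hd : Int.gcd d ((Fintype.card K : ℤ) - 1) = 1) :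
    ∑ a : Kˣ, (weilSum p K d (a : K)) ^ 3 =
      (Fintype.card K : ℂ) ^ 2 * (({x : K | (x + 1) ^ d - x ^ d - 1 = 0} : Set K).ncard : ℂ) := by
  simpa only [weilSum_eq_walshTransform] using
    stmt10_general (traceAddChar_isPrimitive p K) hd
end

section
/- Let K be a finite field of characteristic p and let d be an integer with gcd(d, |K| − 1) = 1 that is nondegenerate over K. Then for every a ∈ K^×, the complex absolute value satisfies |W_{K,d}(a)| < |K|. -/
open scoped BigOperators Classical

/-! If `|W_{K,d}(a)|` were `|K|`, strict convexity of the disc would force all the terms to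
coincide, so `x ↦ Tr(x^d + a x)` would be constant on `K^×`. Write the trace as a sum of powers of
the Frobenius. Multiplying by `x⁻¹` and summing over `K^×` extracts the coefficient of `x`, by
orthogonality of the power maps: the term `Tr(a x)` contributes `-a`, while a constant contributes
`0` (as `|K| > 2`), and so does `Tr(x^d)` since no `x^{d p^i}` is identically `x` on `K^×`.
Hence `a = 0`. -/

section StrictConvex

variable {ι E : Type*} [NormedAddCommGroup E] [NormedSpace ℝ E] [StrictConvexSpace ℝ E]

theorem norm_sum_lt_card_mul_of_ne {s : Finset ι} {f : ι → E} {r : ℝ} (hf : ∀ i ∈ s, ‖f i‖ ≤ r)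
    {i j : ι} (hi : i ∈ s) (hj : j ∈ s) (hij : f i ≠ f j) : ‖∑ k ∈ s, f k‖ < s.card * r := by
  have hcard : (0 : ℝ) < s.card := by exact_mod_cast Finset.card_pos.2 ⟨i, hi⟩
  have hmean : ‖∑ k ∈ s, (s.card : ℝ)⁻¹ • f k‖ < r :=
    norm_sum_lt_of_strictConvexSpace (fun _ _ ↦ by positivity)
      (by simp [hcard.ne']) hi hj hij (inv_ne_zero hcard.ne') (inv_ne_zero hcard.ne') hf
  rwa [← Finset.smul_sum, norm_smul, norm_inv, Real.norm_natCast, inv_mul_lt_iff₀ hcard] at hmean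

end StrictConvex

theorem canonicalAddChar_eq_stdAddChar_trace (p : ℕ) [Fact p.Prime] (K : Type) [Field K]
    [Fintype K] [Algebra (ZMod p) K] (x : K) :
    canonicalAddChar p K x = ZMod.stdAddChar (Algebra.trace (ZMod p) K x) := by
  rw [canonicalAddChar, ZMod.stdAddChar_apply, ZMod.toCircle_apply]

theorem isDegenerate_two (b : ℕ) (d : ℤ) : IsDegenerate b 2 d :=
  ⟨0, Int.modEq_one⟩

section PowersModulo

variable {b n i : ℕ}

theorem IsDegenerate.of_mul_pow_modEq_one {d : ℤ} (hi : i ≤ n)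
    (h : d * (b : ℤ) ^ i ≡ 1 [ZMOD ((b ^ n : ℕ) : ℤ) - 1]) : IsDegenerate b (b ^ n) d := by
  have hbn : (b : ℤ) ^ n ≡ 1 [ZMOD ((b ^ n : ℕ) : ℤ) - 1] := by
    push_cast
    exact Int.modEq_sub _ _
  refine ⟨n - i, ?_⟩
  calc d = d * 1 := (mul_one d).symm
    _ ≡ d * (b : ℤ) ^ n [ZMOD _] := hbn.symm.mul_left d
    _ = d * (b : ℤ) ^ i * (b : ℤ) ^ (n - i) := by rw [mul_assoc, ← pow_add, Nat.add_sub_of_le hi]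
    _ ≡ 1 * (b : ℤ) ^ (n - i) [ZMOD _] := h.mul_right _
    _ = (b : ℤ) ^ (n - i) := one_mul _

theorem pow_modEq_one_iff_of_lt (hb : 1 < b) (hi : i < n) :
    (b : ℤ) ^ i ≡ 1 [ZMOD ((b ^ n : ℕ) : ℤ) - 1] ↔ i = 0 := by
  refine ⟨fun h ↦ ?_, by rintro rfl; simp⟩
  have hpos : 1 ≤ (b : ℤ) ^ i := one_le_pow₀ (by omega)
  have hlt : (b : ℤ) ^ i < (b : ℤ) ^ n := pow_lt_pow_right₀ (by omega) hi
  have hzero : (b : ℤ) ^ i - 1 = 0 :=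
    Int.eq_zero_of_dvd_of_nonneg_of_lt (by omega) (by push_cast; omega) h.symm.dvd
  by_contra hi0
  have := one_lt_pow₀ (show 1 < (b : ℤ) by omega) hi0
  omega

end PowersModulo

section UnitSums

variable {K : Type*} [Field K] [Fintype K]

theorem forall_units_zpow_eq_one_iff (k : ℤ) :
    (∀ x : Kˣ, x ^ k = 1) ↔ (Fintype.card K : ℤ) - 1 ∣ k := by
  rw [← Group.exponent_dvd_iff_forall_zpow_eq_one, IsCyclic.exponent_eq_card,
    Nat.card_eq_fintype_card, Fintype.card_units, Nat.cast_sub Fintype.card_pos, Nat.cast_one]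

theorem sum_zpow_units (k : ℤ) :
    ∑ x : Kˣ, (x : K) ^ k = if (Fintype.card K : ℤ) - 1 ∣ k then -1 else 0 := by
  let φ : Kˣ →* K := (Units.coeHom K).comp (zpowGroupHom k)
  have hφ : φ = 1 ↔ (Fintype.card K : ℤ) - 1 ∣ k := by
    simp [φ, ← forall_units_zpow_eq_one_iff, DFunLike.ext_iff, Units.ext_iff]
  have hcard : (Fintype.card Kˣ : K) = -1 := by
    rw [Fintype.card_units, Nat.cast_sub Fintype.card_pos, FiniteField.cast_card_eq_zero,
      Nat.cast_one, zero_sub]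
  calc ∑ x : Kˣ, (x : K) ^ k = ∑ x : Kˣ, φ x := by simp [φ]
    _ = if (Fintype.card K : ℤ) - 1 ∣ k then -1 else 0 := by
      simp only [sum_hom_units, hφ, Nat.cast_ite, hcard, Nat.cast_zero]

theorem sum_inv_units_eq_zero (hK : 2 < Fintype.card K) : ∑ x : Kˣ, (x : K)⁻¹ = 0 := by
  have hndvd : ¬(Fintype.card K : ℤ) - 1 ∣ -1 := fun h ↦ by
    have := Int.le_of_dvd one_pos (dvd_neg.1 h)
    omega
  simpa [hndvd] using sum_zpow_units (K := K) (-1)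

end UnitSums

section Trace

variable {F K : Type*} [Field F] [Field K] [Fintype K] [Algebra F K]

theorem sum_inv_mul_trace_mul_zpow (b : K) (k : ℤ) :
    ∑ x : Kˣ, (x : K)⁻¹ * algebraMap F K (Algebra.trace F K (b * (x : K) ^ k)) =
      -∑ i ∈ Finset.range (Module.finrank F K) with
        k * (Nat.card F : ℤ) ^ i ≡ 1 [ZMOD (Fintype.card K : ℤ) - 1],
          b ^ Nat.card F ^ i := by
  have hterm (x : Kˣ) (i : ℕ) : (x : K)⁻¹ * (b * (x : K) ^ k) ^ Nat.card F ^ i =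
      b ^ Nat.card F ^ i * (x : K) ^ (k * (Nat.card F : ℤ) ^ i - 1) := by
    rw [zpow_sub_one₀ x.ne_zero, zpow_mul, mul_pow, ← Nat.cast_pow, zpow_natCast]
    ring
  simp only [FiniteField.algebraMap_trace_eq_sum_pow, Finset.mul_sum, hterm]
  rw [Finset.sum_comm, Finset.sum_filter, ← Finset.sum_neg_distrib]
  refine Finset.sum_congr rfl fun i _ ↦ ?_
  simp only [← Finset.mul_sum, sum_zpow_units, Int.modEq_iff_dvd, dvd_sub_comm (b := (1 : ℤ)),
    mul_ite, mul_neg, mul_one, mul_zero, neg_ite, neg_zero]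

theorem sum_inv_mul_trace_mul (a : K) :
    ∑ x : Kˣ, (x : K)⁻¹ * algebraMap F K (Algebra.trace F K (a * x)) = -a := by
  have hfilter : {i ∈ Finset.range (Module.finrank F K) |
      1 * (Nat.card F : ℤ) ^ i ≡ 1 [ZMOD (Fintype.card K : ℤ) - 1]} = {0} := by
    have : Finite F := .of_injective _ (FaithfulSMul.algebraMap_injective F K)
    ext i
    rw [Finset.mem_filter, Finset.mem_range, Finset.mem_singleton, one_mul,
      ← Nat.card_eq_fintype_card, Module.natCard_eq_pow_finrank (K := F) (V := K)]
    constructor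
    · rintro ⟨hi, h⟩
      exact (pow_modEq_one_iff_of_lt Finite.one_lt_card hi).1 h
    · rintro rfl
      simp [Module.finrank_pos]
  simpa only [hfilter, zpow_one, Finset.sum_singleton, pow_zero, pow_one] using
    sum_inv_mul_trace_mul_zpow (F := F) a 1

theorem sum_inv_mul_trace_zpow_eq_zero {d : ℤ}
    (hd : ¬IsDegenerate (Nat.card F) (Fintype.card K) d) :
    ∑ x : Kˣ, (x : K)⁻¹ * algebraMap F K (Algebra.trace F K ((x : K) ^ d)) = 0 := by
  have hfilter : {i ∈ Finset.range (Module.finrank F K) |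
      d * (Nat.card F : ℤ) ^ i ≡ 1 [ZMOD (Fintype.card K : ℤ) - 1]} = ∅ := by
    refine Finset.filter_eq_empty_iff.2 fun i hi h ↦ hd ?_
    rw [← Nat.card_eq_fintype_card, Module.natCard_eq_pow_finrank (K := F) (V := K)] at h ⊢
    exact .of_mul_pow_modEq_one (Finset.mem_range.1 hi).le h
  simpa only [hfilter, one_mul, Finset.sum_empty, neg_zero] using
    sum_inv_mul_trace_mul_zpow (F := F) (1 : K) d

theorem exists_trace_zpow_add_mul_ne {d : ℤ}
    (hd : ¬IsDegenerate (Nat.card F) (Fintype.card K) d) {a : K} (ha : a ≠ 0) :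
    ∃ x y : Kˣ, Algebra.trace F K ((x : K) ^ d + a * x) ≠
      Algebra.trace F K ((y : K) ^ d + a * y) := by
  by_contra! hconst
  have hK : 2 < Fintype.card K :=
    lt_of_le_of_ne' Fintype.one_lt_card fun h ↦ hd (h ▸ isDegenerate_two _ d)
  refine ha (neg_eq_zero.1 ?_)
  calc -a = ∑ x : Kˣ, (x : K)⁻¹ * algebraMap F K (Algebra.trace F K ((x : K) ^ d + a * x)) := by
        simp only [map_add, mul_add, Finset.sum_add_distrib, sum_inv_mul_trace_zpow_eq_zero hd,
          sum_inv_mul_trace_mul, zero_add]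
    _ = (∑ x : Kˣ, (x : K)⁻¹) *
          algebraMap F K (Algebra.trace F K (((1 : Kˣ) : K) ^ d + a * (1 : Kˣ))) := by
        rw [Finset.sum_mul]
        exact Finset.sum_congr rfl fun x _ ↦ by rw [hconst x 1]
    _ = 0 := by rw [sum_inv_units_eq_zero hK, zero_mul]

end Trace

theorem stmt11_general (p : ℕ) [Fact p.Prime] (K : Type) [Field K] [Fintype K]
    [Algebra (ZMod p) K] (d : ℤ) (hnd : ¬IsDegenerate p (Fintype.card K) d) :
    ∀ a : K, a ≠ 0 → ‖weilSum p K d a‖ < Fintype.card K := by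
  intro a ha
  obtain ⟨x, y, hxy⟩ := exists_trace_zpow_add_mul_ne (F := ZMod p) (by rwa [Nat.card_zmod]) ha
  simp only [weilSum, canonicalAddChar_eq_stdAddChar_trace]
  rw [← Finset.card_univ, ← mul_one (Finset.card _ : ℝ)]
  exact norm_sum_lt_card_mul_of_ne (fun z _ ↦ (AddChar.norm_apply _ _).le)
    (Finset.mem_univ (x : K)) (Finset.mem_univ (y : K)) (ZMod.injective_stdAddChar.ne hxy)

theorem stmt11 (p : ℕ) [Fact p.Prime] (K : Type) [Field K] [Fintype K] [CharP K p]
    [Algebra (ZMod p) K]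
    (d : ℤ) (hd : Int.gcd d ((Fintype.card K : ℤ) - 1) = 1)
    (hnd : ¬ IsDegenerate p (Fintype.card K) d) :
    ∀ a : K, a ≠ 0 → ‖weilSum p K d a‖ < Fintype.card K := by
  exact stmt11_general p K d hnd
end
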